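/- Let f : [ℓ,u] → ℝ be L_f-Lipschitz with exact discretization x* ∈ ℝ^I on the uniform grid with I points, let x ∈ ℝ^I, and let f̂_x be the piecewise linear approximation built from x on this grid. Set C = √(8/15)·(u − ℓ)^{3/2}·L_f and D = √(3/40)·(u − ℓ)^{1/2}·L_f. For every ε > 0, if I > C·ε^{−1} + 1 and ‖x − x*‖₂² < D·ε, then (∫_ℓ^u (f̂_x(t) − f(t))² dt)^{1/2} < ε. -/

import Mathlib

open Finset

/-- Uniform grid with `I` points on `[l, u]` (0-indexed): `t[i] = l + i·(u−l)/(I−1)`. -/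
noncomputable def unifGrid (l u : ℝ) (I : ℕ) (i : ℕ) : ℝ := l + i * (u - l) / ((I : ℝ) - 1)

/-!
On a cell rescaled to `[-1, 1]`, let `m` and `d` be half the sum and half the difference of the
nodal errors of `x`, and split chord minus `f` into its even part `p` and odd part `q`. The error
at `±v` is then `(m + p v) ± (d v + q v)`. For `K`-Lipschitz `f` and `v ∈ [0, 1]`,
`|p v| ≤ K (1 - v)` and `|q v| ≤ v (2 K (1 - v) - |p v|)`: a large even part forces a small odd
part. Treating the parts separately loses too much for the constants of the theorem, whereas this
joint bound makes the squared error on a cell of width `h` with nodal errors `e₀, e₁` at most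
`h (4/5 (e₀² + e₁²) + 16/75 (L h)²)`. In the sum over the cells every node occurs at most twice,
and the two hypotheses make the two resulting terms smaller than `3/5 ε²` and `2/5 ε²`.
-/

open scoped NNReal

/-- The affine function with values `y₀` at `a` and `y₁` at `b`, evaluated at `t`; for `a = b` it is
the constant `y₀`. On each grid cell the piecewise linear approximation has this form. -/
noncomputable def linInterp (a b y₀ y₁ t : ℝ) : ℝ := y₀ + (y₁ - y₀) * (t - a) / (b - a)

/-- The even part, at `v`, of the chord of `F` over `[-1, 1]` minus `F`; it adds to the mean of the
nodal errors. -/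
noncomputable def chordEvenPart (F : ℝ → ℝ) (v : ℝ) : ℝ := ((F 1 + F (-1)) - (F v + F (-v))) / 2

/-- The odd part, at `v`, of the chord of `F` over `[-1, 1]` minus `F`; it adds to the linear term
coming from the difference of the nodal errors. -/
noncomputable def chordOddPart (F : ℝ → ℝ) (v : ℝ) : ℝ :=
  (v * (F 1 - F (-1)) - (F v - F (-v))) / 2

lemma continuous_linInterp (a b y₀ y₁ : ℝ) : Continuous (linInterp a b y₀ y₁) := by
  unfold linInterp
  fun_prop

lemma linInterp_comp_affine {a b : ℝ} (hab : a ≠ b) (y₀ y₁ v : ℝ) :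
    linInterp a b y₀ y₁ ((b - a) / 2 * v + (a + b) / 2) = linInterp (-1) 1 y₀ y₁ v := by
  have hba : b - a ≠ 0 := sub_ne_zero.2 hab.symm
  unfold linInterp
  field_simp
  ring

lemma linInterp_sub_sq_add_sq (F : ℝ → ℝ) (y₀ y₁ v : ℝ) :
    (linInterp (-1) 1 y₀ y₁ v - F v) ^ 2 + (linInterp (-1) 1 y₀ y₁ (-v) - F (-v)) ^ 2 =
      2 * ((((y₁ - F 1) + (y₀ - F (-1))) / 2 + chordEvenPart F v) ^ 2 +
        (((y₁ - F 1) - (y₀ - F (-1))) / 2 * v + chordOddPart F v) ^ 2) := by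
  unfold linInterp chordEvenPart chordOddPart
  ring

lemma abs_sub_le_of_lipschitzOnWith {F : ℝ → ℝ} {K : ℝ≥0} {s : Set ℝ} {a b : ℝ}
    (hF : LipschitzOnWith K F s) (ha : a ∈ s) (hb : b ∈ s) (hab : a ≤ b) :
    |F b - F a| ≤ K * (b - a) := by
  simpa only [Real.dist_eq, abs_of_nonneg (sub_nonneg.2 hab)] using hF.dist_le_mul b hb a ha

section NormalizedCell

variable {F : ℝ → ℝ} {K : ℝ≥0} {v : ℝ}

lemma abs_chordEvenPart_le (hF : LipschitzOnWith K F (Set.Icc (-1) 1)) (hv₀ : 0 ≤ v)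
    (hv₁ : v ≤ 1) : |chordEvenPart F v| ≤ K * (1 - v) := by
  have hleft := abs_le.1 <| abs_sub_le_of_lipschitzOnWith hF (a := -1) (b := -v)
    ⟨by simp, by simp⟩ ⟨by linarith, by linarith⟩ (by linarith)
  have hright := abs_le.1 <| abs_sub_le_of_lipschitzOnWith hF (a := v) (b := 1)
    ⟨by linarith, hv₁⟩ ⟨by simp, by simp⟩ hv₁
  rw [chordEvenPart, abs_le]
  constructor <;> linarith

lemma abs_chordOddPart_le (hF : LipschitzOnWith K F (Set.Icc (-1) 1)) (hv₀ : 0 ≤ v)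
    (hv₁ : v ≤ 1) :
    |chordOddPart F v| ≤ v * (2 * (K * (1 - v)) - |chordEvenPart F v|) := by
  have hleft := abs_le.1 <| abs_sub_le_of_lipschitzOnWith hF (a := -1) (b := -v)
    ⟨by simp, by simp⟩ ⟨by linarith, by linarith⟩ (by linarith)
  have hright := abs_le.1 <| abs_sub_le_of_lipschitzOnWith hF (a := v) (b := 1)
    ⟨by linarith, hv₁⟩ ⟨by simp, by simp⟩ hv₁
  have hmid := abs_sub_le_of_lipschitzOnWith hF (a := -v) (b := v)
    ⟨by linarith, by linarith⟩ ⟨by linarith, hv₁⟩ (by linarith)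
  set left := F (-v) - F (-1)
  set right := F 1 - F v
  set mid := F v - F (-v)
  have heven : chordEvenPart F v = (right - left) / 2 := by
    simp only [chordEvenPart, left, right]; ring
  have hodd : chordOddPart F v = v * ((right + left) / 2) - (1 - v) * (mid / 2) := by
    simp only [chordOddPart, left, right, mid]; ring
  have houter : |(right + left) / 2| + |(right - left) / 2| ≤ K * (1 - v) := by
    rcases abs_cases ((right + left) / 2) with h | h <;>
      rcases abs_cases ((right - left) / 2) with h' | h' <;> linarith
  calc |chordOddPart F v|
      ≤ v * |(right + left) / 2| + (1 - v) * |mid / 2| := by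
        rw [hodd]
        refine (abs_sub _ _).trans_eq ?_
        rw [abs_mul, abs_mul, abs_of_nonneg hv₀, abs_of_nonneg (sub_nonneg.2 hv₁)]
    _ ≤ v * (K * (1 - v) - |(right - left) / 2|) + (1 - v) * (K * v) := by
        have hmid_half : |mid / 2| ≤ K * v := by rw [abs_div, abs_two]; linarith
        gcongr
        linarith
    _ = v * (2 * (K * (1 - v)) - |chordEvenPart F v|) := by rw [heven]; ring

end NormalizedCell

-- After `y² ≤ v² (2 r - |x|)²` the left side is convex in `|x| ∈ [0, r]`, and its endpoint values
-- are `4 v² r²` and `(1 + v²) r²`; the former is dominated since `1 - 3 v² + 2 v³` is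
-- `(1 - v)² (1 + 2 v)`.
lemma sq_add_sq_le_of_abs_le {x y r v : ℝ} (hv : 0 ≤ v) (hx : |x| ≤ r)
    (hy : |y| ≤ v * (2 * r - |x|)) :
    x ^ 2 + y ^ 2 ≤ r ^ 2 * (1 + v ^ 2 + 2 * v ^ 3) := by
  have hx₀ := abs_nonneg x
  have hr : 0 ≤ r := hx₀.trans hx
  have hxr : |x| ^ 2 ≤ r * |x| := by nlinarith
  have hchord : (2 * r - |x|) ^ 2 ≤ 4 * r ^ 2 - 3 * (r * |x|) := by nlinarith
  have hcubic : 4 * v ^ 2 ≤ 1 + v ^ 2 + 2 * v ^ 3 := by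
    nlinarith [mul_nonneg (sq_nonneg (1 - v)) (by linarith : 0 ≤ 1 + 2 * v)]
  calc x ^ 2 + y ^ 2 = |x| ^ 2 + |y| ^ 2 := by rw [sq_abs, sq_abs]
    _ ≤ |x| ^ 2 + v ^ 2 * (2 * r - |x|) ^ 2 := by rw [← mul_pow]; gcongr
    _ ≤ r * |x| + v ^ 2 * (4 * r ^ 2 - 3 * (r * |x|)) := by gcongr
    _ = r * (|x| * (1 + v ^ 2)) + r * ((r - |x|) * (4 * v ^ 2)) := by ring
    _ ≤ r * (|x| * (1 + v ^ 2 + 2 * v ^ 3)) +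
          r * ((r - |x|) * (1 + v ^ 2 + 2 * v ^ 3)) := by
        have : 0 ≤ r - |x| := sub_nonneg.2 hx
        have hlast : 1 + v ^ 2 ≤ 1 + v ^ 2 + 2 * v ^ 3 := le_add_of_nonneg_right (by positivity)
        gcongr ?_ * (?_ * ?_) + ?_ * (?_ * ?_)
    _ = r ^ 2 * (1 + v ^ 2 + 2 * v ^ 3) := by ring

/-- A majorant of half the sum of the squared errors at `±v` in the cell `[-1, 1]`, where `m` and
`d` are half the sum and half the difference of the nodal errors and `r` is the Lipschitz bound on
the change of the function between `±v` and the nearest node. -/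
def errorMajorant (m d r v : ℝ) : ℝ :=
  m ^ 2 + 2 * |m| * r + d ^ 2 * v ^ 2 + 4 * |d| * (v ^ 2 * r) + r ^ 2 * (1 + v ^ 2 + 2 * v ^ 3)

lemma add_sq_add_add_sq_le_errorMajorant {x y r v : ℝ} (m d : ℝ) (hv : 0 ≤ v) (hx : |x| ≤ r)
    (hy : |y| ≤ v * (2 * r - |x|)) :
    (m + x) ^ 2 + (d * v + y) ^ 2 ≤ errorMajorant m d r v := by
  have hmx : m * x ≤ |m| * r :=
    (le_abs_self _).trans <| by rw [abs_mul]; gcongr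
  have hdy : d * y ≤ |d| * (v * (2 * r)) :=
    (le_abs_self _).trans <| by
      rw [abs_mul]
      gcongr
      exact hy.trans <| by gcongr; linarith [abs_nonneg x]
  have hvdy := mul_le_mul_of_nonneg_left hdy hv
  unfold errorMajorant
  linarith [sq_add_sq_le_of_abs_le hv hx hy]

lemma integral_neg_le_integral_of_add_comp_neg_le {g G : ℝ → ℝ} {r : ℝ} (hr : 0 ≤ r)
    (hg : IntervalIntegrable g MeasureTheory.volume (-r) r)
    (hG : IntervalIntegrable G MeasureTheory.volume 0 r)
    (hgG : ∀ v ∈ Set.Icc 0 r, g v + g (-v) ≤ G v) :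
    ∫ v in -r..r, g v ≤ ∫ v in 0..r, G v := by
  have hzero : (0 : ℝ) ∈ Set.uIcc (-r) r := by
    rw [Set.uIcc_of_le (neg_le_self hr)]
    exact ⟨neg_nonpos.2 hr, hr⟩
  have hneg := hg.mono_set (Set.uIcc_subset_uIcc_left hzero)
  have hpos := hg.mono_set (Set.uIcc_subset_uIcc_right hzero)
  have hcomp : IntervalIntegrable (fun v => g (-v)) MeasureTheory.volume 0 r := by
    simpa using hneg.symm.comp_sub_left 0
  calc ∫ v in -r..r, g v = (∫ v in 0..r, g v) + ∫ v in 0..r, g (-v) := by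
        rw [intervalIntegral.integral_comp_neg, neg_zero, add_comm,
          intervalIntegral.integral_add_adjacent_intervals hneg hpos]
    _ = ∫ v in 0..r, (g v + g (-v)) := (intervalIntegral.integral_add hpos hcomp).symm
    _ ≤ ∫ v in 0..r, G v := intervalIntegral.integral_mono_on hr (hpos.add hcomp) hG hgG

lemma integral_zero_one_sum_mul_pow {n : ℕ} (c : Fin n → ℝ) :
    ∫ v in (0 : ℝ)..1, ∑ i, c i * v ^ (i : ℕ) = ∑ i, c i / (i + 1) := by
  rw [intervalIntegral.integral_finsetSum fun i _ =>
    Continuous.intervalIntegrable (by fun_prop) _ _]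
  simp [div_eq_mul_inv]

lemma integral_errorMajorant (m d K : ℝ) :
    ∫ v in (0 : ℝ)..1, errorMajorant m d (K * (1 - v)) v =
      m ^ 2 + |m| * K + d ^ 2 / 3 + |d| * K / 3 + 2 / 5 * K ^ 2 := by
  have hcoeff := integral_zero_one_sum_mul_pow
    ![m ^ 2 + 2 * |m| * K + K ^ 2, -2 * |m| * K - 2 * K ^ 2,
      d ^ 2 + 4 * |d| * K + 2 * K ^ 2, -4 * |d| * K, -3 * K ^ 2, 2 * K ^ 2]
  simp only [Fin.sum_univ_six] at hcoeff
  convert hcoeff using 1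
  · congr 1 with v
    simp only [errorMajorant, Matrix.cons_val, Fin.coe_ofNat_eq_mod]
    ring
  · simp only [Matrix.cons_val, Fin.coe_ofNat_eq_mod]
    ring

lemma integral_errorMajorant_le (m d K : ℝ) :
    ∫ v in (0 : ℝ)..1, errorMajorant m d (K * (1 - v)) v ≤
      8 / 5 * (m ^ 2 + d ^ 2) + 64 / 75 * K ^ 2 := by
  have hmean : |m| * K ≤ 3 / 5 * m ^ 2 + 5 / 12 * K ^ 2 := by
    linarith [sq_nonneg (|m| - 5 / 6 * K), sq_abs m]
  have hdiff : |d| * K / 3 ≤ 19 / 15 * d ^ 2 + 5 / 228 * K ^ 2 := by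
    linarith [sq_nonneg (|d| - 5 / 38 * K), sq_abs d]
  rw [integral_errorMajorant]
  linarith [sq_nonneg K]

lemma integral_linInterp_neg_one_one_sub_sq_le {F : ℝ → ℝ} {K : ℝ≥0}
    (hF : LipschitzOnWith K F (Set.Icc (-1) 1)) (y₀ y₁ : ℝ) :
    ∫ v in (-1 : ℝ)..1, (linInterp (-1) 1 y₀ y₁ v - F v) ^ 2 ≤
      2 * (4 / 5 * ((y₀ - F (-1)) ^ 2 + (y₁ - F 1) ^ 2) + 64 / 75 * (K : ℝ) ^ 2) := by
  set m := ((y₁ - F 1) + (y₀ - F (-1))) / 2 with hm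
  set d := ((y₁ - F 1) - (y₀ - F (-1))) / 2 with hd
  have hcont : ContinuousOn (fun v => (linInterp (-1) 1 y₀ y₁ v - F v) ^ 2) (Set.Icc (-1) 1) :=
    ((continuous_linInterp _ _ _ _).continuousOn.sub hF.continuousOn).pow 2
  have hmajorant : Continuous fun v => 2 * errorMajorant m d (K * (1 - v)) v := by
    unfold errorMajorant
    fun_prop
  have hpair : ∀ v ∈ Set.Icc (0 : ℝ) 1,
      (linInterp (-1) 1 y₀ y₁ v - F v) ^ 2 + (linInterp (-1) 1 y₀ y₁ (-v) - F (-v)) ^ 2 ≤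
        2 * errorMajorant m d (K * (1 - v)) v := by
    rintro v ⟨hv₀, hv₁⟩
    rw [linInterp_sub_sq_add_sq]
    exact mul_le_mul_of_nonneg_left (add_sq_add_add_sq_le_errorMajorant m d hv₀
      (abs_chordEvenPart_le hF hv₀ hv₁) (abs_chordOddPart_le hF hv₀ hv₁)) zero_le_two
  calc ∫ v in (-1 : ℝ)..1, (linInterp (-1) 1 y₀ y₁ v - F v) ^ 2
      ≤ ∫ v in (0 : ℝ)..1, 2 * errorMajorant m d (K * (1 - v)) v :=
        integral_neg_le_integral_of_add_comp_neg_le zero_le_one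
          (hcont.intervalIntegrable_of_Icc (by norm_num)) (hmajorant.intervalIntegrable _ _) hpair
    _ ≤ 2 * (8 / 5 * (m ^ 2 + d ^ 2) + 64 / 75 * (K : ℝ) ^ 2) := by
        rw [intervalIntegral.integral_const_mul]
        gcongr
        exact integral_errorMajorant_le m d K
    _ = _ := by rw [hm, hd]; ring

lemma integral_linInterp_sub_sq_le {f : ℝ → ℝ} {L : ℝ≥0} {a b : ℝ} (hab : a ≤ b)
    (hf : LipschitzOnWith L f (Set.Icc a b)) (y₀ y₁ : ℝ) :
    ∫ t in a..b, (linInterp a b y₀ y₁ t - f t) ^ 2 ≤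
      (b - a) * (4 / 5 * ((y₀ - f a) ^ 2 + (y₁ - f b) ^ 2) + 16 / 75 * (L * (b - a)) ^ 2) := by
  rcases hab.eq_or_lt with rfl | hlt
  · simp
  set ρ := (b - a) / 2 with hρ
  set c := (a + b) / 2
  have hρ₀ : 0 < ρ := by linarith
  have hleft : ρ * (-1) + c = a := by ring
  have hright : ρ * 1 + c = b := by ring
  have hmaps : Set.MapsTo (fun v => ρ * v + c) (Set.Icc (-1) 1) (Set.Icc a b) := by
    rintro v ⟨hv₀, hv₁⟩
    constructor <;> nlinarith
  have haffine : LipschitzWith ρ.toNNReal fun v => ρ * v + c :=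
    LipschitzWith.of_dist_le' fun s t => by
      rw [dist_add_right, Real.dist_eq, Real.dist_eq, ← mul_sub, abs_mul, abs_of_pos hρ₀]
  have hcell := integral_linInterp_neg_one_one_sub_sq_le
    (hf.comp haffine.lipschitzOnWith hmaps) y₀ y₁
  calc ∫ t in a..b, (linInterp a b y₀ y₁ t - f t) ^ 2
      = ρ * ∫ v in (-1 : ℝ)..1, (linInterp (-1) 1 y₀ y₁ v - f (ρ * v + c)) ^ 2 := by
        simp_rw [← linInterp_comp_affine hlt.ne y₀ y₁]
        rw [intervalIntegral.mul_integral_comp_mul_add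
          (f := fun t => (linInterp a b y₀ y₁ t - f t) ^ 2), hleft, hright]
    _ ≤ ρ * (2 * (4 / 5 * ((y₀ - f a) ^ 2 + (y₁ - f b) ^ 2) + 64 / 75 * (L * ρ) ^ 2)) := by
        simp only [Function.comp_apply, hleft, hright, NNReal.coe_mul,
          Real.coe_toNNReal _ hρ₀.le] at hcell
        gcongr
    _ = _ := by rw [hρ]; ring

section Partition

variable {t x : ℕ → ℝ} {N : ℕ} {f g : ℝ → ℝ} {L : ℝ≥0}

lemma integral_sub_sq_le_sum_of_piecewise_linear (ht : Monotone t)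
    (hf : LipschitzOnWith L f (Set.Icc (t 0) (t N)))
    (hg : ∀ i < N, Set.EqOn g (linInterp (t i) (t (i + 1)) (x i) (x (i + 1)))
      (Set.Icc (t i) (t (i + 1)))) :
    ∫ s in t 0..t N, (g s - f s) ^ 2 ≤ ∑ i ∈ range N, (t (i + 1) - t i) *
      (4 / 5 * ((x i - f (t i)) ^ 2 + (x (i + 1) - f (t (i + 1))) ^ 2) +
        16 / 75 * (L * (t (i + 1) - t i)) ^ 2) := by
  have hstep (i : ℕ) : t i ≤ t (i + 1) := ht i.le_succ
  have hfcell (i : ℕ) (hi : i < N) : LipschitzOnWith L f (Set.Icc (t i) (t (i + 1))) :=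
    hf.mono (Set.Icc_subset_Icc (ht i.zero_le) (ht hi))
  have hcongr (i : ℕ) (hi : i < N) : Set.EqOn (fun s => (g s - f s) ^ 2)
      (fun s => (linInterp (t i) (t (i + 1)) (x i) (x (i + 1)) s - f s) ^ 2)
      (Set.Icc (t i) (t (i + 1))) := fun s hs => by simp only [hg i hi hs]
  have hint (i : ℕ) (hi : i < N) : IntervalIntegrable (fun s => (g s - f s) ^ 2)
      MeasureTheory.volume (t i) (t (i + 1)) :=
    ((((continuous_linInterp _ _ _ _).continuousOn.sub (hfcell i hi).continuousOn).pow 2).congr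
      (hcongr i hi)).intervalIntegrable_of_Icc (hstep i)
  rw [← intervalIntegral.sum_integral_adjacent_intervals hint]
  refine sum_le_sum fun i hi => ?_
  have hi := mem_range.1 hi
  rw [intervalIntegral.integral_congr (Set.uIcc_of_le (hstep i) ▸ hcongr i hi)]
  exact integral_linInterp_sub_sq_le (hstep i) (hfcell i hi) _ _

lemma integral_sub_sq_le_of_piecewise_linear {h : ℝ} (ht : Monotone t) (hh : 0 ≤ h)
    (hmesh : ∀ i < N, t (i + 1) - t i ≤ h) (hf : LipschitzOnWith L f (Set.Icc (t 0) (t N)))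
    (hg : ∀ i < N, Set.EqOn g (linInterp (t i) (t (i + 1)) (x i) (x (i + 1)))
      (Set.Icc (t i) (t (i + 1)))) :
    ∫ s in t 0..t N, (g s - f s) ^ 2 ≤
      8 / 5 * (h * ∑ i ∈ range (N + 1), (x i - f (t i)) ^ 2) +
        16 / 75 * ((t N - t 0) * (L * h) ^ 2) := by
  set e : ℕ → ℝ := fun i => (x i - f (t i)) ^ 2
  have he (i : ℕ) : 0 ≤ e i := sq_nonneg _
  have hgap (i : ℕ) : 0 ≤ t (i + 1) - t i := sub_nonneg.2 (ht i.le_succ)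
  have hcell (i : ℕ) (hi : i ∈ range N) :
      (t (i + 1) - t i) * (4 / 5 * (e i + e (i + 1)) + 16 / 75 * (L * (t (i + 1) - t i)) ^ 2) ≤
        4 / 5 * (h * (e i + e (i + 1))) + 16 / 75 * ((t (i + 1) - t i) * (L * h) ^ 2) := by
    have hgap_le := hmesh i (mem_range.1 hi)
    have hnode := mul_le_mul_of_nonneg_right hgap_le (add_nonneg (he i) (he (i + 1)))
    have hlip : (t (i + 1) - t i) * (L * (t (i + 1) - t i)) ^ 2 ≤
        (t (i + 1) - t i) * (L * h) ^ 2 := by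
      have := hgap i
      gcongr
    linarith
  have hleft : ∑ i ∈ range N, e i ≤ ∑ i ∈ range (N + 1), e i := by
    rw [sum_range_succ]; linarith [he N]
  have hright : ∑ i ∈ range N, e (i + 1) ≤ ∑ i ∈ range (N + 1), e i := by
    rw [sum_range_succ']; linarith [he 0]
  calc ∫ s in t 0..t N, (g s - f s) ^ 2
      ≤ ∑ i ∈ range N, (4 / 5 * (h * (e i + e (i + 1))) +
          16 / 75 * ((t (i + 1) - t i) * (L * h) ^ 2)) :=
        (integral_sub_sq_le_sum_of_piecewise_linear ht hf hg).trans (sum_le_sum hcell)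
    _ = 4 / 5 * (h * (∑ i ∈ range N, e i + ∑ i ∈ range N, e (i + 1))) +
          16 / 75 * ((t N - t 0) * (L * h) ^ 2) := by
        rw [sum_add_distrib, ← mul_sum, ← mul_sum, ← mul_sum, ← sum_mul, sum_range_sub,
          sum_add_distrib]
    _ ≤ 4 / 5 * (h * (∑ i ∈ range (N + 1), e i + ∑ i ∈ range (N + 1), e i)) +
          16 / 75 * ((t N - t 0) * (L * h) ^ 2) := by gcongr
    _ = _ := by ring

end Partition

lemma unifGrid_zero (l u : ℝ) (I : ℕ) : unifGrid l u I 0 = l := by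
  simp [unifGrid]

lemma unifGrid_last {N : ℕ} (hN : N ≠ 0) (l u : ℝ) : unifGrid l u (N + 1) N = u := by
  have hN' : (N : ℝ) ≠ 0 := Nat.cast_ne_zero.2 hN
  rw [unifGrid, Nat.cast_succ, add_sub_cancel_right]
  field_simp
  ring

lemma unifGrid_succ_sub (l u : ℝ) (I i : ℕ) :
    unifGrid l u I (i + 1) - unifGrid l u I i = (u - l) / ((I : ℝ) - 1) := by
  simp only [unifGrid, Nat.cast_succ]
  ring

lemma monotone_unifGrid {l u : ℝ} {I : ℕ} (hlu : l ≤ u) (hI : 1 ≤ I) :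
    Monotone (unifGrid l u I) :=
  monotone_nat_of_le_succ fun i => sub_nonneg.1 <| by
    rw [unifGrid_succ_sub]
    exact div_nonneg (sub_nonneg.2 hlu) (sub_nonneg.2 (by exact_mod_cast hI))

lemma integral_sub_sq_le_of_eqOn_unifGrid {l u : ℝ} {N : ℕ} {x : ℕ → ℝ} {f g : ℝ → ℝ} {L : ℝ≥0}
    (hlu : l ≤ u) (hN : N ≠ 0) (hf : LipschitzOnWith L f (Set.Icc l u))
    (hg : ∀ i < N, Set.EqOn g
      (linInterp (unifGrid l u (N + 1) i) (unifGrid l u (N + 1) (i + 1)) (x i) (x (i + 1)))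
      (Set.Icc (unifGrid l u (N + 1) i) (unifGrid l u (N + 1) (i + 1)))) :
    ∫ s in l..u, (g s - f s) ^ 2 ≤
      8 / 5 * ((u - l) / N * ∑ i ∈ range (N + 1), (x i - f (unifGrid l u (N + 1) i)) ^ 2) +
        16 / 75 * ((u - l) * (L * ((u - l) / N)) ^ 2) := by
  have hfirst := unifGrid_zero l u (N + 1)
  have hlast := unifGrid_last hN l u
  have hgap (i : ℕ) :
      unifGrid l u (N + 1) (i + 1) - unifGrid l u (N + 1) i = (u - l) / N := by
    rw [unifGrid_succ_sub, Nat.cast_succ, add_sub_cancel_right]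
  have hbound := integral_sub_sq_le_of_piecewise_linear
    (monotone_unifGrid hlu N.succ_pos) (div_nonneg (sub_nonneg.2 hlu) N.cast_nonneg)
    (fun i _ => (hgap i).le) (by rwa [hfirst, hlast]) hg
  rwa [hfirst, hlast] at hbound

lemma sqrt_three_div_forty : Real.sqrt (3 / 40) = 3 / 8 * Real.sqrt (8 / 15) := by
  rw [show (3 / 40 : ℝ) = (3 / 8) ^ 2 * (8 / 15) by norm_num, Real.sqrt_mul (by norm_num),
    Real.sqrt_sq (by norm_num)]

lemma nodal_add_lipschitz_error_lt_sq {W L h S ε : ℝ} (hW : 0 ≤ W) (hL : 0 ≤ L) (hh : 0 < h)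
    (hmesh : Real.sqrt (8 / 15) * Real.sqrt W * L * h < ε)
    (hS : S < Real.sqrt (3 / 40) * Real.sqrt W * L * ε) :
    8 / 5 * (h * S) + 16 / 75 * (W * (L * h) ^ 2) < ε ^ 2 := by
  set k := Real.sqrt (8 / 15) * Real.sqrt W * L with hk
  have hkh : 0 ≤ k * h := mul_nonneg (by positivity) hh.le
  have hk_sq : k ^ 2 = 8 / 15 * W * L ^ 2 := by
    rw [hk, mul_pow, mul_pow, Real.sq_sqrt (by norm_num), Real.sq_sqrt hW]
  have hnodal : h * S < 3 / 8 * ε ^ 2 := calc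
    h * S < h * (3 / 8 * k * ε) := by
      refine mul_lt_mul_of_pos_left (hS.trans_eq ?_) hh
      rw [sqrt_three_div_forty, hk]
      ring
    _ = 3 / 8 * (k * h * ε) := by ring
    _ ≤ 3 / 8 * (ε * ε) := by
      have hε : 0 ≤ ε := hkh.trans hmesh.le
      gcongr
    _ = 3 / 8 * ε ^ 2 := by ring
  have hlipschitz : 8 / 15 * (W * (L * h) ^ 2) < ε ^ 2 := calc
    8 / 15 * (W * (L * h) ^ 2) = (k * h) ^ 2 := by rw [mul_pow k, hk_sq]; ring
    _ < ε ^ 2 := by gcongr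
  linarith

/-- Connection between the continuous and discrete problems: an approximately correct
discretization yields an approximately correct piecewise linear function. -/
theorem continuous_discrete_connection
    (l u : ℝ) (hlu : l < u) (I : ℕ) (hI2 : 2 ≤ I)
    (f : ℝ → ℝ) (Lf : ℝ)
    (hfLip : ∀ s ∈ Set.Icc l u, ∀ t ∈ Set.Icc l u, |f s - f t| ≤ Lf * |s - t|)
    (x : ℕ → ℝ) (fhat : ℝ → ℝ)
    (hfhat : ∀ i : ℕ, i + 1 < I → ∀ t ∈ Set.Icc (unifGrid l u I i) (unifGrid l u I (i + 1)),
      fhat t = x i + (x (i + 1) - x i) * (t - unifGrid l u I i) / ((u - l) / ((I : ℝ) - 1)))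
    (ε : ℝ) (hε : 0 < ε)
    (hI : (I : ℝ) > (Real.sqrt (8 / 15) * ((u - l) * Real.sqrt (u - l)) * Lf) / ε + 1)
    (hx : ∑ i ∈ range I, (x i - f (unifGrid l u I i)) ^ 2 <
      (Real.sqrt (3 / 40) * Real.sqrt (u - l) * Lf) * ε) :
    Real.sqrt (∫ t in l..u, (fhat t - f t) ^ 2) < ε := by
  obtain ⟨N, rfl⟩ : ∃ N, I = N + 1 := ⟨I - 1, by omega⟩
  have hN : (0 : ℝ) < N := Nat.cast_pos.2 (by omega)
  have hlen : 0 < u - l := sub_pos.2 hlu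
  have hLf : 0 ≤ Lf := nonneg_of_mul_nonneg_left
    ((abs_nonneg _).trans (hfLip u (Set.right_mem_Icc.2 hlu.le) l (Set.left_mem_Icc.2 hlu.le)))
    (abs_pos.2 hlen.ne')
  have hmesh : Real.sqrt (8 / 15) * Real.sqrt (u - l) * Lf * ((u - l) / N) < ε := by
    rw [gt_iff_lt, Nat.cast_succ, add_lt_add_iff_right, div_lt_comm₀ hε hN] at hI
    exact hI.trans_eq' (by ring)
  have hbound := integral_sub_sq_le_of_eqOn_unifGrid (g := fhat) (x := x) hlu.le
    (by omega : N ≠ 0) (.of_dist_le' hfLip)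
    fun i hi s hs => by rw [linInterp, unifGrid_succ_sub, hfhat i (by omega) s hs]
  rw [Real.coe_toNNReal _ hLf] at hbound
  rw [Real.sqrt_lt' hε]
  exact hbound.trans_lt <|
    nodal_add_lipschitz_error_lt_sq hlen.le hLf (div_pos hlen hN) hmesh hx
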